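/- arXiv:2604.24206 — 2 statements merged into one kernel-verified Lean document; each statement's English description precedes it below -/
import Mathlib

section
/- Let H be a complex Hilbert space, let M be a von Neumann algebra acting on H, and let τ be a tracial state on M (a linear functional with τ(1) = 1, τ(x*x) ≥ 0 for all x ∈ M, and τ(xy) = τ(yx) for all x, y ∈ M). Let 0 < δ ≤ 1/4 and let a, p, c ∈ M be positive contractions satisfying ap = a = pa, pc = p = cp, and ‖p² − p‖_{2,τ} ≤ δ. Then there exists a projection q ∈ M (q = q* = q²) such that aq = a = qa, qc = q = cq, and ‖q − p‖_{2,τ} ≤ 2√δ. -/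
open scoped ComplexOrder

/-- The 2-seminorm `‖x‖_{2,τ} = (τ(x*x))^{1/2}` associated to a positive tracial
linear functional `τ`. -/
noncomputable def norm2 {A : Type*} [NonUnitalRing A] [StarRing A] [Module ℂ A]
    (τ : A →ₗ[ℂ] ℂ) (x : A) : ℝ :=
  Real.sqrt (τ (star x * x)).re

/-! Let `q = 1_{(1/2, ∞)}(p)`, the support projection of the positive part of `s = 2p - 1`.
An eigenvector of `p` for the eigenvalue `1` lies in the range of `q`, and one for the eigenvalue
`0` in its kernel, which gives the relations with `a` and `c`. The symmetry `e = 2q - 1` satisfies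
`s = e|s| = |s|e`, so that `4(q - p)² = (e - s)² = (1 - |s|)²`, while
`16(p² - p)² = (1 - s²)² = (1 - |s|)²(1 + |s|)²` is larger. Apply `τ`. -/

section PosPart

variable {A : Type*} [CStarAlgebra A] [PartialOrder A] [StarOrderedRing A] {s y : A}

lemma negPart_mul_eq_zero_of_mul_eq_self (hs : IsSelfAdjoint s) (h : s * y = y) :
    s⁻ * y = 0 := by
  have hneg : s⁻ * s = -(s⁻ * s⁻) := by
    nth_rw 2 [← CFC.posPart_sub_negPart s hs]
    rw [mul_sub, CFC.negPart_mul_posPart, zero_sub]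
  have hunit : IsUnit (s⁻ + 1) :=
    CStarAlgebra.isUnit_of_le 1 (le_add_of_nonneg_left (CFC.negPart_nonneg s))
  refine hunit.mul_right_eq_zero.mp ?_
  calc (s⁻ + 1) * (s⁻ * y) = s⁻ * s⁻ * y + s⁻ * (s * y) := by rw [h]; noncomm_ring
    _ = 0 := by rw [← mul_assoc s⁻ s y, hneg, neg_mul, add_neg_cancel]

lemma posPart_mul_eq_zero_of_mul_eq_neg (hs : IsSelfAdjoint s) (h : s * y = -y) :
    s⁺ * y = 0 := by
  rw [← CFC.negPart_neg]
  exact negPart_mul_eq_zero_of_mul_eq_self hs.neg (by rw [neg_mul, h, neg_neg])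

lemma posPart_mul_eq_self_of_mul_eq_self (hs : IsSelfAdjoint s) (h : s * y = y) :
    s⁺ * y = y := by
  have hsub : (s⁺ - s⁻) * y = y := by rwa [CFC.posPart_sub_negPart s hs]
  rwa [sub_mul, negPart_mul_eq_zero_of_mul_eq_self hs h, sub_zero] at hsub

end PosPart

lemma sub_mul_self_le_of_symmetry_mul_eq {A : Type*} [Ring A] [StarRing A] [PartialOrder A]
    [StarOrderedRing A] {e s u : A} (hu : 0 ≤ u) (he : e * e = 1) (heu : e * u = s)
    (hue : u * e = s) : (e - s) * (e - s) ≤ (1 - s * s) * (1 - s * s) := by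
  have hsub : (e - s) * (e - s) = (1 - u) * (1 - u) := by
    calc (e - s) * (e - s) = (e - u * e) * (e - e * u) := by rw [heu, hue]
      _ = (1 - u) * (e * e) * (1 - u) := by noncomm_ring
      _ = (1 - u) * (1 - u) := by rw [he, mul_one]
  have hsq : s * s = u * u := by
    calc s * s = u * e * (e * u) := by rw [heu, hue]
      _ = u * (e * e) * u := by noncomm_ring
      _ = u * u := by rw [he, mul_one]
  have husa : IsSelfAdjoint u := .of_nonneg hu
  have hmid : 0 ≤ u + u + u * u :=
    add_nonneg (add_nonneg hu hu) husa.mul_self_nonneg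
  have hconj : 0 ≤ (1 - u) * (u + u + u * u) * (1 - u) :=
    IsSelfAdjoint.conjugate_nonneg hmid ((IsSelfAdjoint.one A).sub husa)
  rw [hsub, hsq, ← sub_nonneg]
  convert hconj using 1
  noncomm_ring

lemma isSelfAdjoint_two_mul_sub_one {R : Type*} [Ring R] [StarRing R] {r : R}
    (hr : IsSelfAdjoint r) : IsSelfAdjoint (2 * r - 1) := by
  rw [two_mul]
  exact (hr.add hr).sub (.one R)

section SupportProjection

variable {𝕜 E F G : Type*} [RCLike 𝕜] [NormedAddCommGroup E] [InnerProductSpace 𝕜 E]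
  [CompleteSpace E] [NormedAddCommGroup F] [NormedSpace 𝕜 F] [NormedAddCommGroup G]
  [NormedSpace 𝕜 G]

/-- The (right) support projection of a bounded operator `T`: the orthogonal projection onto
`(ker T)ᗮ`, which is the least projection `q` with `T q = T`. -/
noncomputable def supportProjection (T : E →L[𝕜] F) : E →L[𝕜] E :=
  T.kerᗮ.starProjection

lemma isStarProjection_supportProjection (T : E →L[𝕜] F) :
    IsStarProjection (supportProjection T) :=
  isStarProjection_starProjection

lemma ker_supportProjection (T : E →L[𝕜] F) : (supportProjection T).ker = T.ker := by
  have : CompleteSpace T.ker := T.isClosed_ker.completeSpace_coe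
  rw [supportProjection, Submodule.ker_starProjection, Submodule.orthogonal_orthogonal]

lemma supportProjection_comp_eq_zero {T : E →L[𝕜] F} {X : G →L[𝕜] E} (h : T ∘L X = 0) :
    supportProjection T ∘L X = 0 := by
  ext v
  have hker : X v ∈ T.ker := DFunLike.congr_fun h v
  rwa [← ker_supportProjection T] at hker

lemma comp_supportProjection (T : E →L[𝕜] F) : T ∘L supportProjection T = T := by
  ext v
  have hker : v - supportProjection T v ∈ T.ker := by
    rw [← ker_supportProjection T, LinearMap.mem_ker]
    have hidem := DFunLike.congr_fun (isStarProjection_supportProjection T).isIdempotentElem.eq v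
    simpa [sub_eq_zero] using hidem.symm
  have hv : T (v - supportProjection T v) = 0 := hker
  rw [map_sub, sub_eq_zero] at hv
  exact hv.symm

lemma supportProjection_mul_self {T : E →L[𝕜] E} (hT : IsSelfAdjoint T) :
    supportProjection T * T = T := by
  have hstar := congrArg star (comp_supportProjection T)
  rwa [← ContinuousLinearMap.mul_def, star_mul, hT.star_eq,
    (isStarProjection_supportProjection T).isSelfAdjoint.star_eq] at hstar

end SupportProjection

section VonNeumannAlgebra

variable {H : Type*} [NormedAddCommGroup H] [InnerProductSpace ℂ H] [CompleteSpace H]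
  {M : VonNeumannAlgebra H} {x : H →L[ℂ] H}

lemma cfcₙ_mem_vonNeumannAlgebra (f : ℝ → ℝ) (hx : x ∈ M) : cfcₙ f x ∈ M := by
  rw [← M.commutant_commutant, VonNeumannAlgebra.mem_commutant_iff]
  intro y hy
  have hcomm : Commute x y := VonNeumannAlgebra.mem_commutant_iff.mp hy x hx
  exact (hcomm.cfcₙ_real f).symm.eq

lemma supportProjection_mem_vonNeumannAlgebra (hx : x ∈ M) : supportProjection x ∈ M := by
  set q := supportProjection x
  have hq : star q = q := (isStarProjection_supportProjection x).isSelfAdjoint.star_eq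
  have hxq : x * (1 - q) = 0 := by
    rw [mul_sub, mul_one, sub_eq_zero]
    exact (comp_supportProjection x).symm
  have hcompress : ∀ y ∈ M.commutant, q * y * q = q * y := by
    intro y hy
    have hxy : x * (y * (1 - q)) = 0 := by
      rw [← mul_assoc, VonNeumannAlgebra.mem_commutant_iff.mp hy x hx, mul_assoc, hxq, mul_zero]
    have hqy : q * (y * (1 - q)) = 0 := supportProjection_comp_eq_zero hxy
    rw [mul_sub, mul_one, mul_sub, sub_eq_zero] at hqy
    rw [mul_assoc, hqy]
  rw [← M.commutant_commutant, VonNeumannAlgebra.mem_commutant_iff]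
  intro y hy
  calc y * q = star (q * star y) := by rw [star_mul, star_star, hq]
    _ = star (q * star y * q) := by rw [hcompress _ (star_mem hy)]
    _ = q * y * q := by rw [star_mul, star_mul, star_star, hq, mul_assoc]
    _ = q * y := hcompress y hy

end VonNeumannAlgebra

section SpectralRounding

variable {H : Type*} [NormedAddCommGroup H] [InnerProductSpace ℂ H] [CompleteSpace H]
  {p y : H →L[ℂ] H}

/-- The spectral projection `1_{(1/2, ∞)}(p)` of a self-adjoint operator `p`: functional calculus
with the function rounding `[0, 1]` to `{0, 1}`. As Mathlib has no Borel functional calculus, it is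
encoded as the support projection of `(2p - 1)⁺`; its value is `0` when `p` is not self-adjoint. -/
noncomputable def spectralRounding (p : H →L[ℂ] H) : H →L[ℂ] H :=
  supportProjection (2 * p - 1)⁺

lemma isStarProjection_spectralRounding (p : H →L[ℂ] H) :
    IsStarProjection (spectralRounding p) :=
  isStarProjection_supportProjection _

lemma spectralRounding_mem_vonNeumannAlgebra {M : VonNeumannAlgebra H} (hp : p ∈ M) :
    spectralRounding p ∈ M := by
  have hmem : 2 * p - 1 ∈ M := by
    rw [two_mul]
    exact sub_mem (add_mem hp hp) (one_mem M)
  exact supportProjection_mem_vonNeumannAlgebra (cfcₙ_mem_vonNeumannAlgebra _ hmem)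

lemma spectralRounding_mul_posPart (p : H →L[ℂ] H) :
    spectralRounding p * (2 * p - 1)⁺ = (2 * p - 1)⁺ :=
  supportProjection_mul_self (.of_nonneg (CFC.posPart_nonneg _))

lemma spectralRounding_mul_negPart (p : H →L[ℂ] H) :
    spectralRounding p * (2 * p - 1)⁻ = 0 :=
  supportProjection_comp_eq_zero (CFC.posPart_mul_negPart _)

lemma spectralRounding_mul_eq_right (hp : IsSelfAdjoint p) (h : p * y = y) :
    spectralRounding p * y = y := by
  have hs : (2 * p - 1) * y = y := by
    rw [sub_mul, mul_assoc, h, one_mul, two_mul, add_sub_cancel_right]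
  have hpos := posPart_mul_eq_self_of_mul_eq_self (isSelfAdjoint_two_mul_sub_one hp) hs
  rw [← hpos, ← mul_assoc, spectralRounding_mul_posPart]

lemma mul_spectralRounding_eq_left (hp : IsSelfAdjoint p) (h : y * p = y) :
    y * spectralRounding p = y := by
  have hstar : p * star y = star y := by rw [← hp.star_eq, ← star_mul, h]
  simpa [(isStarProjection_spectralRounding p).isSelfAdjoint.star_eq] using
    congrArg star (spectralRounding_mul_eq_right hp hstar)

lemma spectralRounding_mul_eq_left (hp : IsSelfAdjoint p) (h : p * y = p) :
    spectralRounding p * y = spectralRounding p := by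
  have hs : (2 * p - 1) * (1 - y) = -(1 - y) := by
    rw [sub_mul, mul_assoc, mul_sub p, h, mul_one, sub_self, mul_zero, zero_sub, one_mul]
  have hzero : spectralRounding p * (1 - y) = 0 := supportProjection_comp_eq_zero
    (posPart_mul_eq_zero_of_mul_eq_neg (isSelfAdjoint_two_mul_sub_one hp) hs)
  rw [mul_sub, mul_one, sub_eq_zero] at hzero
  exact hzero.symm

lemma mul_spectralRounding_eq_right (hp : IsSelfAdjoint p) (h : y * p = p) :
    y * spectralRounding p = spectralRounding p := by
  have hstar : p * star y = p := by rw [← hp.star_eq, ← star_mul, h]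
  simpa [(isStarProjection_spectralRounding p).isSelfAdjoint.star_eq] using
    congrArg star (spectralRounding_mul_eq_left hp hstar)

lemma two_mul_spectralRounding_sub_one_mul_abs (hp : IsSelfAdjoint p) :
    (2 * spectralRounding p - 1) * CFC.abs (2 * p - 1) = 2 * p - 1 := by
  have hs := isSelfAdjoint_two_mul_sub_one hp
  calc (2 * spectralRounding p - 1) * CFC.abs (2 * p - 1)
      = (2 * spectralRounding p - 1) * ((2 * p - 1)⁺ + (2 * p - 1)⁻) := by
        rw [CFC.posPart_add_negPart _ hs]
    _ = 2 * (spectralRounding p * (2 * p - 1)⁺) + 2 * (spectralRounding p * (2 * p - 1)⁻) -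
          ((2 * p - 1)⁺ + (2 * p - 1)⁻) := by noncomm_ring
    _ = (2 * p - 1)⁺ - (2 * p - 1)⁻ := by
        rw [spectralRounding_mul_posPart, spectralRounding_mul_negPart, mul_zero, add_zero, two_mul]
        abel
    _ = 2 * p - 1 := CFC.posPart_sub_negPart _ hs

lemma abs_mul_two_mul_spectralRounding_sub_one (hp : IsSelfAdjoint p) :
    CFC.abs (2 * p - 1) * (2 * spectralRounding p - 1) = 2 * p - 1 := by
  have hstar := congrArg star (two_mul_spectralRounding_sub_one_mul_abs hp)
  rwa [star_mul, (IsSelfAdjoint.of_nonneg (CFC.abs_nonneg _)).star_eq,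
    (isSelfAdjoint_two_mul_sub_one (isStarProjection_spectralRounding p).isSelfAdjoint).star_eq,
    (isSelfAdjoint_two_mul_sub_one hp).star_eq] at hstar

lemma star_mul_self_spectralRounding_sub_le (hp : IsSelfAdjoint p) :
    star ((2 : ℂ) • (spectralRounding p - p)) * ((2 : ℂ) • (spectralRounding p - p)) ≤
      star ((4 : ℂ) • (p * p - p)) * ((4 : ℂ) • (p * p - p)) := by
  have hq := isStarProjection_spectralRounding p
  have hsymm : (2 * spectralRounding p - 1) * (2 * spectralRounding p - 1) = 1 := by
    have hunitary := Unitary.star_mul_self_of_mem hq.two_mul_sub_one_mem_unitary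
    rwa [(isSelfAdjoint_two_mul_sub_one hq.isSelfAdjoint).star_eq] at hunitary
  have hdist : (2 : ℂ) • (spectralRounding p - p) =
      2 * spectralRounding p - 1 - (2 * p - 1) := by
    rw [ofNat_smul_eq_nsmul]; noncomm_ring
  have hdefect : (4 : ℂ) • (p * p - p) = -(1 - (2 * p - 1) * (2 * p - 1)) := by
    rw [ofNat_smul_eq_nsmul]; noncomm_ring
  have hdist_star :
      star ((2 : ℂ) • (spectralRounding p - p)) = (2 : ℂ) • (spectralRounding p - p) := by
    simp [hq.isSelfAdjoint.star_eq, hp.star_eq]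
  have hdefect_star : star ((4 : ℂ) • (p * p - p)) = (4 : ℂ) • (p * p - p) := by
    simp [hp.star_eq]
  rw [hdist_star, hdefect_star, hdist, hdefect, neg_mul_neg]
  exact sub_mul_self_le_of_symmetry_mul_eq (CFC.abs_nonneg _) hsymm
    (two_mul_spectralRounding_sub_one_mul_abs hp) (abs_mul_two_mul_spectralRounding_sub_one hp)

end SpectralRounding

section Norm2

lemma norm2_smul {A : Type*} [NonUnitalRing A] [StarRing A] [Module ℂ A] [StarModule ℂ A]
    [IsScalarTower ℂ A A] [SMulCommClass ℂ A A] (τ : A →ₗ[ℂ] ℂ) (z : ℂ) (x : A) :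
    norm2 τ (z • x) = ‖z‖ * norm2 τ x := by
  have hre : (τ (star (z • x) * (z • x))).re = ‖z‖ ^ 2 * (τ (star x * x)).re := by
    rw [star_smul, smul_mul_smul_comm, map_smul, smul_eq_mul, RCLike.star_def, Complex.conj_mul',
      ← Complex.ofReal_pow, Complex.re_ofReal_mul]
  rw [norm2, hre, Real.sqrt_mul (sq_nonneg _), Real.sqrt_sq (norm_nonneg z), norm2]

variable {H : Type*} [NormedAddCommGroup H] [InnerProductSpace ℂ H] [CompleteSpace H]
  {M : VonNeumannAlgebra H} {τ : M.toStarSubalgebra →ₗ[ℂ] ℂ}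

lemma map_nonneg_of_forall_star_mul_self_nonneg (hτ : ∀ x, 0 ≤ τ (star x * x))
    {x : M.toStarSubalgebra} (hx : 0 ≤ (x : H →L[ℂ] H)) : 0 ≤ τ x := by
  have hmem : CFC.sqrt (x : H →L[ℂ] H) ∈ M := by
    rw [CFC.sqrt_eq_real_sqrt _ hx]
    exact cfcₙ_mem_vonNeumannAlgebra _ x.2
  let r : M.toStarSubalgebra := ⟨CFC.sqrt (x : H →L[ℂ] H), hmem⟩
  have hr : star r * r = x := Subtype.ext <| by
    change star (CFC.sqrt (x : H →L[ℂ] H)) * CFC.sqrt (x : H →L[ℂ] H) = x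
    rw [(IsSelfAdjoint.of_nonneg (CFC.sqrt_nonneg _)).star_eq, CFC.sqrt_mul_sqrt_self _ hx]
  exact hr ▸ hτ r

lemma norm2_le_norm2_of_star_mul_self_le (hτ : ∀ x, 0 ≤ τ (star x * x))
    {x y : M.toStarSubalgebra}
    (h : star (x : H →L[ℂ] H) * x ≤ star (y : H →L[ℂ] H) * y) : norm2 τ x ≤ norm2 τ y := by
  have hsub : 0 ≤ τ (star y * y - star x * x) :=
    map_nonneg_of_forall_star_mul_self_nonneg hτ (sub_nonneg.mpr h)
  rw [map_sub, sub_nonneg] at hsub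
  exact Real.sqrt_le_sqrt (Complex.le_def.mp hsub).1

end Norm2

theorem vonNeumann_stability_of_projections_general
    {H : Type*} [NormedAddCommGroup H] [InnerProductSpace ℂ H] [CompleteSpace H]
    (M : VonNeumannAlgebra H) (τ : M.toStarSubalgebra →ₗ[ℂ] ℂ)
    (hτ : ∀ x : M.toStarSubalgebra, 0 ≤ τ (star x * x))
    (a p c : M.toStarSubalgebra) (hp : IsSelfAdjoint (p : H →L[ℂ] H))
    (hap : a * p = a) (hpa : p * a = a) (hpc : p * c = p) (hcp : c * p = p) :
    ∃ q : M.toStarSubalgebra, star q = q ∧ q * q = q ∧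
      a * q = a ∧ q * a = a ∧ q * c = q ∧ c * q = q ∧
      norm2 τ (q - p) ≤ 2 * norm2 τ (p * p - p) := by
  let q : M.toStarSubalgebra :=
    ⟨spectralRounding (p : H →L[ℂ] H), spectralRounding_mem_vonNeumannAlgebra p.2⟩
  have hq := isStarProjection_spectralRounding (p : H →L[ℂ] H)
  have hnorm : norm2 τ ((2 : ℂ) • (q - p)) ≤ norm2 τ ((4 : ℂ) • (p * p - p)) :=
    norm2_le_norm2_of_star_mul_self_le hτ (star_mul_self_spectralRounding_sub_le hp)
  rw [norm2_smul, norm2_smul, Complex.norm_ofNat, Complex.norm_ofNat] at hnorm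
  exact ⟨q, Subtype.ext hq.isSelfAdjoint.star_eq, Subtype.ext hq.isIdempotentElem.eq,
    Subtype.ext (mul_spectralRounding_eq_left hp (congrArg Subtype.val hap)),
    Subtype.ext (spectralRounding_mul_eq_right hp (congrArg Subtype.val hpa)),
    Subtype.ext (spectralRounding_mul_eq_left hp (congrArg Subtype.val hpc)),
    Subtype.ext (mul_spectralRounding_eq_right hp (congrArg Subtype.val hcp)), by linarith⟩

/-- Let `M` be a von Neumann algebra acting on a complex Hilbert space `H` and let `τ` be a
tracial state on `M`.  Let `0 < δ ≤ 1/4` and let `a, p, c ∈ M` be positive contractions with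
`ap = a = pa`, `pc = p = cp` and `‖p² - p‖_{2,τ} ≤ δ`.  Then there is a projection `q ∈ M`
with `aq = a = qa`, `qc = q = cq` and `‖q - p‖_{2,τ} ≤ 2√δ`. -/
theorem vonNeumann_stability_of_projections
    {H : Type*} [NormedAddCommGroup H] [InnerProductSpace ℂ H] [CompleteSpace H]
    (M : VonNeumannAlgebra H)
    (τ : M.toStarSubalgebra →ₗ[ℂ] ℂ)
    (hτ1 : τ 1 = 1)
    (hτpos : ∀ x : M.toStarSubalgebra, 0 ≤ τ (star x * x))
    (hτtr : ∀ x y : M.toStarSubalgebra, τ (x * y) = τ (y * x))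
    (δ : ℝ) (hδ0 : 0 < δ) (hδ : δ ≤ 1 / 4)
    (a p c : M.toStarSubalgebra)
    (ha0 : 0 ≤ (a : H →L[ℂ] H)) (ha1 : ‖(a : H →L[ℂ] H)‖ ≤ 1)
    (hp0 : 0 ≤ (p : H →L[ℂ] H)) (hp1 : ‖(p : H →L[ℂ] H)‖ ≤ 1)
    (hc0 : 0 ≤ (c : H →L[ℂ] H)) (hc1 : ‖(c : H →L[ℂ] H)‖ ≤ 1)
    (hap : a * p = a) (hpa : p * a = a)
    (hpc : p * c = p) (hcp : c * p = p)
    (hpδ : norm2 τ (p * p - p) ≤ δ) :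
    ∃ q : M.toStarSubalgebra, star q = q ∧ q * q = q ∧
      a * q = a ∧ q * a = a ∧ q * c = q ∧ c * q = q ∧
      norm2 τ (q - p) ≤ 2 * Real.sqrt δ := by
  obtain ⟨q, hqs, hqq, haq, hqa, hqc, hcq, hle⟩ :=
    vonNeumann_stability_of_projections_general M τ hτpos a p c (.of_nonneg hp0) hap hpa hpc hcp
  have hδsqrt : δ ≤ √δ := Real.le_sqrt_of_sq_le (by nlinarith)
  exact ⟨q, hqs, hqq, haq, hqa, hqc, hcq, hle.trans (by linarith)⟩
end

section
/- Let H be a complex Hilbert space, let M be a von Neumann algebra acting on H, and let τ be a faithful tracial state on M (a linear functional with τ(1) = 1, τ(x*x) ≥ 0 with equality only when x = 0, and τ(xy) = τ(yx) for all x, y ∈ M). Let ε > 0 and let a ∈ M satisfy ‖a − |a|‖_{2,τ} < ε², where |a| = (a*a)^{1/2}. Then there exists a unitary u ∈ M such that ‖u − 1‖_{2,τ} < 4ε and a·g_ε(|a|) = u·f_ε(|a|), where g_ε(t) = max(t − ε, 0)/t for t > 0 and g_ε(0) = 0, f_ε(t) = max(t − ε, 0), and g_ε(|a|), f_ε(|a|)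 are defined by continuous functional calculus. -/
/-!
Write `a = u |a|` with `u` unitary and let `p = |a| k` with `k = max(|a|, ε)⁻¹`, a spectral cutoff
that equals `1` on the part of the spectrum of `|a|` above `ε`. As `‖k‖ ≤ 1 / ε`, the 2-norm
satisfies `ε ‖(u - 1) p‖ ≤ ‖(u - 1) |a|‖ = ‖a - |a|‖`. The element
`z = 1 + (1 - p) (u* - 1) (1 - p)` is within `2 ‖(u - 1) p‖` of `u*`, and both `z` and `z*` fix
every `f` with `p f = f`. The unitary `w` in the polar decomposition of `z` is a best approximation
of `z` by unitaries, so `‖w - u*‖ ≤ 4 ‖(u - 1) p‖`, and it fixes the same `f`. Hence `u w` is within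
`4 ‖(u - 1) p‖` of `1` and `u w f = u f`, in particular for `f = (|a| - ε)₊`.

Unitary polar decompositions exist in the presence of a faithful trace. The contractions `x ∈ M`
with `x |y| = y` form a nonempty compact convex set in the weak operator topology. An extreme point
`x` satisfies `(1 - x x*) t (1 - x* x) = 0` for all `t ∈ M`, and the trace forces such an `x` to be
unitary.
-/

open scoped ComplexOrder

open scoped InnerProductSpace Topology
open Filter

/-! ### The 2-norm of a positive trace -/

/-- A positive tracial functional `τ` on a star-algebra. No normalization is imposed, so states
and their nonnegative multiples (including `0`) are covered. -/
structure IsPositiveTrace {A : Type*} [NonUnitalRing A] [StarRing A] [Module ℂ A]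
    (τ : A →ₗ[ℂ] ℂ) : Prop where
  nonneg : ∀ x, 0 ≤ τ (star x * x)
  comm : ∀ x y, τ (x * y) = τ (y * x)

section

variable {A : Type*} [NonUnitalRing A] [StarRing A] [Module ℂ A] {τ : A →ₗ[ℂ] ℂ}

theorem norm2_neg (x : A) : norm2 τ (-x) = norm2 τ x := by
  rw [norm2, norm2, star_neg, neg_mul_neg]

theorem norm2_sub_comm (x y : A) : norm2 τ (x - y) = norm2 τ (y - x) := by
  rw [← norm2_neg, neg_sub]

theorem IsPositiveTrace.norm2_star (hτ : IsPositiveTrace τ) (x : A) :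
    norm2 τ (star x) = norm2 τ x := by
  rw [norm2, norm2, star_star, hτ.comm]

end

section

variable {A : Type*} [Ring A] [StarRing A] [Module ℂ A] {τ : A →ₗ[ℂ] ℂ}

theorem norm2_mul_left_of_mem_unitary {u : A} (hu : u ∈ unitary A) (x : A) :
    norm2 τ (u * x) = norm2 τ x := by
  rw [norm2, norm2, star_mul, mul_assoc, ← mul_assoc (star u), Unitary.star_mul_self_of_mem hu,
    one_mul]

end

namespace IsPositiveTrace

section NonUnital

variable {A : Type*} [NonUnitalCStarAlgebra A] [PartialOrder A] [StarOrderedRing A]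
  {τ : A →ₗ[ℂ] ℂ} (hτ : IsPositiveTrace τ)
include hτ

theorem map_nonneg {x : A} (hx : 0 ≤ x) : 0 ≤ τ x := by
  obtain ⟨s, rfl⟩ := CStarAlgebra.nonneg_iff_eq_star_mul_self.1 hx
  exact hτ.nonneg s

theorem norm2_add_le (x y : A) : norm2 τ (x + y) ≤ norm2 τ x + norm2 τ y :=
  let φ := PositiveLinearMap.mk₀ τ fun _ => hτ.map_nonneg
  norm_add_le (φ.toPreGNS x) (φ.toPreGNS y)

theorem norm2_sub_le_norm2_sub_add_norm2_sub (x y z : A) :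
    norm2 τ (x - z) ≤ norm2 τ (x - y) + norm2 τ (y - z) := by
  simpa using hτ.norm2_add_le (x - y) (y - z)

theorem norm2_mul_le (c x : A) : norm2 τ (c * x) ≤ ‖c‖ * norm2 τ x :=
  let φ := PositiveLinearMap.mk₀ τ fun _ => hτ.map_nonneg
  (φ.leftMulMapPreGNS c).le_of_opNorm_le (LinearMap.mkContinuous_norm_le _ (norm_nonneg c) _)
    (φ.toPreGNS x)

theorem norm2_mul_le_mul_norm (x c : A) : norm2 τ (x * c) ≤ norm2 τ x * ‖c‖ := by
  rw [← hτ.norm2_star, star_mul, ← hτ.norm2_star x, ← norm_star c, mul_comm]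
  exact hτ.norm2_mul_le _ _

end NonUnital

variable {A : Type*} [CStarAlgebra A] [PartialOrder A] [StarOrderedRing A]
  {τ : A →ₗ[ℂ] ℂ} (hτ : IsPositiveTrace τ)
include hτ

theorem norm2_one_sub_le {v h : A} (hv : v ∈ unitary A) (hh : 0 ≤ h) :
    norm2 τ (1 - h) ≤ norm2 τ (v - h) := by
  obtain ⟨s, rfl⟩ := CStarAlgebra.nonneg_iff_eq_star_mul_self.1 hh
  have hdiff : τ (star (v - star s * s) * (v - star s * s)) =
      τ (star (1 - star s * s) * (1 - star s * s)) + τ (star (s * v - s) * (s * v - s)) := by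
    have hv1 := Unitary.star_mul_self_of_mem hv
    have hv2 := Unitary.mul_star_self_of_mem hv
    have h1 : τ (star v * (star s * (s * v))) = τ (star s * s) := by
      rw [hτ.comm]
      simp [mul_assoc, hv2]
    simp only [star_sub, star_mul, star_star, star_one, mul_sub, sub_mul, map_sub, hv1, one_mul,
      mul_one, mul_assoc, h1]
    ring
  refine Real.sqrt_le_sqrt ?_
  rw [hdiff, Complex.add_re]
  exact le_add_of_nonneg_right (Complex.nonneg_iff.1 (hτ.nonneg _)).1

theorem norm2_sub_mul_abs_le {v w z : A} (hv : v ∈ unitary A) (hw : w ∈ unitary A)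
    (hz : w * CFC.abs z = z) : norm2 τ (w - z) ≤ norm2 τ (v - z) := by
  have hmul : ∀ y : A, norm2 τ (y - z) = norm2 τ (star w * y - CFC.abs z) := fun y => by
    have hwz : star w * z = CFC.abs z := calc
      star w * z = star w * w * CFC.abs z := by rw [mul_assoc, hz]
      _ = CFC.abs z := by rw [Unitary.star_mul_self_of_mem hw, one_mul]
    rw [← norm2_mul_left_of_mem_unitary (Unitary.star_mem hw), mul_sub, hwz]
  rw [hmul, hmul, Unitary.star_mul_self_of_mem hw]
  exact hτ.norm2_one_sub_le (mul_mem (Unitary.star_mem hw) hv) (CFC.abs_nonneg z)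

end IsPositiveTrace

/-! ### Defects of contractions -/

theorem eq_zero_of_mem_extremePoints_of_add_of_sub {E : Type*} [AddCommGroup E] [Module ℝ E]
    {s : Set E} {x e : E} (hx : x ∈ s.extremePoints ℝ) (hadd : x + e ∈ s) (hsub : x - e ∈ s) :
    e = 0 := by
  refine add_eq_left.1 (hx.2 hadd hsub ⟨2⁻¹, 2⁻¹, by norm_num, by norm_num, by norm_num, ?_⟩)
  module

theorem mul_eq_zero_of_star_mul_mul_eq_zero {A : Type*} [NonUnitalCStarAlgebra A]
    [PartialOrder A] [StarOrderedRing A] {b c : A} (hc : 0 ≤ c) (h : star b * c * b = 0) :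
    c * b = 0 := by
  obtain ⟨s, rfl⟩ := CStarAlgebra.nonneg_iff_eq_star_mul_self.1 hc
  have hs : s * b = 0 := by
    rw [← CStarRing.star_mul_self_eq_zero_iff, star_mul, ← h]
    noncomm_ring
  rw [mul_assoc, hs, mul_zero]

section

variable {R : Type*} [Ring R] [StarRing R]

theorem mul_pow_mul_star_pow_eq {c x : R} (h : ∀ t, c * t * (1 - x * star x) = 0) (n : ℕ) :
    c * (x ^ n * star x ^ n) = c := by
  induction n with
  | zero => simp
  | succ n ih => calc
      c * (x ^ (n + 1) * star x ^ (n + 1))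
          = c * (x ^ n * star x ^ n) - c * x ^ n * (1 - x * star x) * star x ^ n := by
        rw [pow_succ x, pow_succ' (star x)]
        noncomm_ring
      _ = c := by rw [ih, h, zero_mul, sub_zero]

theorem sum_star_pow_mul_defect_mul_pow (x : R) (n : ℕ) :
    ∑ k ∈ Finset.range n, star x ^ k * (1 - star x * x) * x ^ k = 1 - star x ^ n * x ^ n := by
  have h : ∀ k, star x ^ k * (1 - star x * x) * x ^ k =
      star x ^ k * x ^ k - star x ^ (k + 1) * x ^ (k + 1) := fun k => by
    rw [pow_succ (star x), pow_succ' x]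
    noncomm_ring
  simp only [h]
  rw [Finset.sum_range_sub' fun k => star x ^ k * x ^ k, pow_zero, pow_zero, one_mul]

theorem star_mul_self_add_defect_mul_mul_defect (x t : R) :
    star (x + (1 - x * star x) * t * (1 - star x * x)) *
        (x + (1 - x * star x) * t * (1 - star x * x)) =
      star x * x + (1 - star x * x) *
        (star x * t + star t * x + star t * ((1 - x * star x) * (1 - x * star x)) * t) *
        (1 - star x * x) := by
  simp only [star_add, star_mul, star_sub, star_one, star_star]
  noncomm_ring

end

section

variable {A : Type*} [CStarAlgebra A] [PartialOrder A] [StarOrderedRing A]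

theorem norm_le_one_iff_star_mul_self_le_one {x : A} : ‖x‖ ≤ 1 ↔ star x * x ≤ 1 := by
  rw [← CStarAlgebra.norm_le_one_iff_of_nonneg _ (star_mul_self_nonneg x),
    CStarRing.norm_star_mul_self, ← sq, sq_le_one_iff₀ (norm_nonneg x)]

theorem norm_le_one_iff_mul_star_self_le_one {x : A} : ‖x‖ ≤ 1 ↔ x * star x ≤ 1 := by
  rw [← norm_star, norm_le_one_iff_star_mul_self_le_one, star_star]

theorem norm_one_sub_mul_star_self_le_one {x : A} (hx : ‖x‖ ≤ 1) : ‖1 - x * star x‖ ≤ 1 :=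
  (CStarAlgebra.norm_le_one_iff_of_nonneg _
    (sub_nonneg.2 (norm_le_one_iff_mul_star_self_le_one.1 hx))).2
    (sub_le_self 1 (mul_star_self_nonneg x))

theorem mul_mul_self_le_of_norm_le_one {c m : A} (hc0 : 0 ≤ c) (hc1 : c ≤ 1)
    (hm : IsSelfAdjoint m) (hm1 : ‖m‖ ≤ 1) : c * m * c ≤ c := calc
  c * m * c ≤ c * 1 * c := by
    refine IsSelfAdjoint.conjugate_le_conjugate ?_ hc0.isSelfAdjoint
    calc m ≤ algebraMap ℝ A ‖m‖ := hm.le_algebraMap_norm_self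
      _ ≤ 1 := by simpa using algebraMap_mono A hm1
  _ ≤ c := by
    simpa [sq] using CStarAlgebra.pow_antitone hc0 hc1 one_le_two

theorem norm_add_defect_mul_mul_defect_le_one {x t : A} (hx : ‖x‖ ≤ 1) (ht : ‖t‖ ≤ 1 / 3) :
    ‖x + (1 - x * star x) * t * (1 - star x * x)‖ ≤ 1 := by
  set c := 1 - star x * x with hc
  set d := 1 - x * star x with hd
  have hdnorm : ‖d‖ ≤ 1 := norm_one_sub_mul_star_self_le_one hx
  have hdstar : star d = d := by simp [hd]
  let m := star x * t + star t * x + star t * (d * d) * t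
  have hm : ‖m‖ ≤ 1 := by
    have h1 : ‖star x * t‖ ≤ 1 * (1 / 3) :=
      norm_mul_le_of_le ((norm_star x).trans_le hx) ht
    have h2 : ‖star t * x‖ ≤ 1 / 3 * 1 :=
      norm_mul_le_of_le ((norm_star t).trans_le ht) hx
    have h3 : ‖star t * (d * d) * t‖ ≤ 1 / 3 * (1 * 1) * (1 / 3) :=
      norm_mul_le_of_le (norm_mul_le_of_le ((norm_star t).trans_le ht)
        (norm_mul_le_of_le hdnorm hdnorm)) ht
    linarith [norm_add₃_le (a := star x * t) (b := star t * x) (c := star t * (d * d) * t)]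
  have hmsa : IsSelfAdjoint m := by
    simp only [m, IsSelfAdjoint, star_add, star_mul, star_star, hdstar, mul_assoc]
    abel
  rw [norm_le_one_iff_star_mul_self_le_one, star_mul_self_add_defect_mul_mul_defect]
  calc star x * x + c * m * c
      ≤ star x * x + c := by
        gcongr
        exact mul_mul_self_le_of_norm_le_one
          (sub_nonneg.2 (norm_le_one_iff_star_mul_self_le_one.1 hx))
          (sub_le_self 1 (star_mul_self_nonneg x)) hmsa hm
    _ = 1 := by rw [hc, add_sub_cancel]

theorem defect_mul_mul_defect_eq_zero_of_mem_extremePoints {b x y : A}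
    (hx : x ∈ {x | ‖x‖ ≤ 1 ∧ x * b = y}.extremePoints ℝ) (hy : star y * y = star b * b) (t : A) :
    (1 - x * star x) * t * (1 - star x * x) = 0 := by
  obtain ⟨hx1, hxb⟩ := hx.1
  have hcb : (1 - star x * x) * b = 0 := by
    refine mul_eq_zero_of_star_mul_mul_eq_zero
      (sub_nonneg.2 (norm_le_one_iff_star_mul_self_le_one.1 hx1)) ?_
    calc star b * (1 - star x * x) * b = star b * b - star (x * b) * (x * b) := by
          rw [star_mul]; noncomm_ring
      _ = 0 := by rw [hxb, hy, sub_self]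
  have hmem : ∀ s : A, ‖s‖ ≤ 1 / 3 →
      x + (1 - x * star x) * s * (1 - star x * x) ∈ {x | ‖x‖ ≤ 1 ∧ x * b = y} := fun s hs =>
    ⟨norm_add_defect_mul_mul_defect_le_one hx1 hs, by
      rw [add_mul, mul_assoc _ _ b, hcb, mul_zero, add_zero, hxb]⟩
  obtain ⟨δ, hδ, hδt⟩ : ∃ δ : ℝ, 0 < δ ∧ ‖δ • t‖ ≤ 1 / 3 := by
    refine ⟨(3 * (‖t‖ + 1))⁻¹, by positivity, ?_⟩
    rw [norm_smul, Real.norm_of_nonneg (by positivity), inv_mul_le_iff₀ (by positivity)]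
    linarith
  have hzero := eq_zero_of_mem_extremePoints_of_add_of_sub hx (hmem (δ • t) hδt) (by
    simpa [sub_eq_add_neg] using hmem (-(δ • t)) (by rwa [norm_neg]))
  rw [mul_smul_comm, smul_mul_assoc] at hzero
  exact (smul_eq_zero_iff_right hδ.ne').1 hzero

namespace IsPositiveTrace

variable {τ : A →ₗ[ℂ] ℂ} (hτ : IsPositiveTrace τ)
include hτ

-- The compressions of the defect `1 - x* x` by powers of `x` all have the same trace, and they
-- add up to at most `1`: there is room for infinitely many only if that trace vanishes.
theorem map_defect_eq_zero {x : A} (hx : ‖x‖ ≤ 1)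
    (h : ∀ t, (1 - x * star x) * t * (1 - star x * x) = 0) : τ (1 - star x * x) = 0 := by
  have hstar : ∀ t, (1 - star x * x) * t * (1 - x * star x) = 0 := fun t => by
    simpa [mul_assoc] using congrArg star (h (star t))
  have hterm : ∀ k, τ (star x ^ k * (1 - star x * x) * x ^ k) = τ (1 - star x * x) := fun k => by
    rw [mul_assoc, hτ.comm, mul_assoc, mul_pow_mul_star_pow_eq hstar]
  have hbound : ∀ n : ℕ, n • τ (1 - star x * x) ≤ τ 1 := fun n => calc
    n • τ (1 - star x * x) = τ (1 - star x ^ n * x ^ n) := by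
      rw [← sum_star_pow_mul_defect_mul_pow, map_sum, Finset.sum_congr rfl fun k _ => hterm k,
        Finset.sum_const, Finset.card_range]
    _ ≤ τ 1 := by
      rw [map_sub, ← star_pow]
      exact sub_le_self _ (hτ.nonneg _)
  have hnonneg : 0 ≤ τ (1 - star x * x) :=
    hτ.map_nonneg (sub_nonneg.2 (norm_le_one_iff_star_mul_self_le_one.1 hx))
  by_contra hne
  obtain ⟨n, hn⟩ := exists_lt_nsmul (Complex.pos_iff.1 (hnonneg.lt_of_ne' hne)).1 (τ 1).re
  exact hn.not_ge (by simpa using (Complex.le_def.1 (hbound n)).1)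

theorem mem_unitary_of_defect_mul_mul_defect_eq_zero (hfaithful : ∀ x, τ (star x * x) = 0 → x = 0)
    {x : A} (hx : ‖x‖ ≤ 1) (h : ∀ t, (1 - x * star x) * t * (1 - star x * x) = 0) :
    x ∈ unitary A := by
  have hzero : ∀ {y : A}, 0 ≤ y → τ y = 0 → y = 0 := fun hy hτy => by
    obtain ⟨s, rfl⟩ := CStarAlgebra.nonneg_iff_eq_star_mul_self.1 hy
    rw [hfaithful s hτy, mul_zero]
  have hτc := hτ.map_defect_eq_zero hx h
  have hτd : τ (1 - x * star x) = 0 := by rw [← hτc, map_sub, map_sub, hτ.comm]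
  have hc := hzero (sub_nonneg.2 (norm_le_one_iff_star_mul_self_le_one.1 hx)) hτc
  have hd := hzero (sub_nonneg.2 (norm_le_one_iff_mul_star_self_le_one.1 hx)) hτd
  exact ⟨(sub_eq_zero.1 hc).symm, (sub_eq_zero.1 hd).symm⟩

end IsPositiveTrace

end

/-! ### Spectral truncation -/

theorem norm_abs_mul {A : Type*} [NonUnitalCStarAlgebra A] [PartialOrder A] [StarOrderedRing A]
    (y x : A) : ‖CFC.abs y * x‖ = ‖y * x‖ := by
  rw [← sq_eq_sq₀ (norm_nonneg _) (norm_nonneg _), sq, sq, ← CStarRing.norm_star_mul_self,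
    ← CStarRing.norm_star_mul_self, star_mul, star_mul, (CFC.abs_nonneg y).isSelfAdjoint.star_eq,
    mul_assoc, mul_assoc, ← mul_assoc _ _ x, CFC.abs_mul_abs, mul_assoc]

theorem mul_inv_max_mem_Icc {ε t : ℝ} (hε : 0 < ε) (ht : 0 ≤ t) :
    t * (max t ε)⁻¹ ∈ Set.Icc 0 1 :=
  ⟨by positivity, mul_inv_le_one_of_le₀ (le_max_left t ε) (ht.trans (le_max_left t ε))⟩

theorem one_sub_mul_inv_max_of_le {ε t : ℝ} (hε : 0 < ε) (ht : ε ≤ t) :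
    1 - t * (max t ε)⁻¹ = 0 := by
  rw [max_eq_left ht, mul_inv_cancel₀ (hε.trans_le ht).ne', sub_self]

theorem continuous_inv_max {ε : ℝ} (hε : 0 < ε) : Continuous fun t : ℝ => (max t ε)⁻¹ :=
  (continuous_id.max continuous_const).inv₀ fun _ => (lt_max_of_lt_right hε).ne'

theorem continuous_max_sub_div {ε : ℝ} (hε : 0 < ε) :
    Continuous fun t : ℝ => max (t - ε) 0 / t := by
  have hdiv : (fun t : ℝ => max (t - ε) 0 / t) = fun t => max (t - ε) 0 / max t ε := by
    ext t
    rcases le_total t ε with h | h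
    · rw [max_eq_right (sub_nonpos.2 h), zero_div, zero_div]
    · rw [max_eq_left h]
  rw [hdiv]
  exact .div (by fun_prop) (by fun_prop) fun t => (lt_max_of_lt_right hε).ne'

section

variable {A : Type*} [CStarAlgebra A]

/-- The inverse of `b` truncated at level `ε`, through the functional calculus of
`t ↦ (max t ε)⁻¹`. For `b ≥ 0` the product `b * truncInv ε b` is a continuous substitute for the
spectral projection of `b` onto `[ε, ∞)`. -/
noncomputable def truncInv (ε : ℝ) (b : A) : A :=
  cfc (fun t : ℝ => (max t ε)⁻¹) b

variable {ε : ℝ} {b : A}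

theorem norm_truncInv_le (hε : 0 < ε) (b : A) : ‖truncInv ε b‖ ≤ ε⁻¹ :=
  norm_cfc_le (by positivity) fun t _ => by
    rw [norm_inv, Real.norm_of_nonneg (hε.le.trans (le_max_right t ε))]
    exact inv_anti₀ hε (le_max_right t ε)

theorem mul_truncInv (hε : 0 < ε) (hb : IsSelfAdjoint b) :
    b * truncInv ε b = cfc (fun t : ℝ => t * (max t ε)⁻¹) b := by
  rw [cfc_mul (fun t => t) _ b (by fun_prop) (continuous_inv_max hε).continuousOn,
    cfc_id' ℝ b, truncInv]

theorem one_sub_mul_truncInv (hε : 0 < ε) (hb : IsSelfAdjoint b) :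
    1 - b * truncInv ε b = cfc (fun t : ℝ => 1 - t * (max t ε)⁻¹) b := by
  have hcont := continuous_inv_max hε
  rw [cfc_sub (fun _ => 1) _ b (by fun_prop) (by fun_prop), cfc_const_one ℝ b, mul_truncInv hε hb]

theorem commute_truncInv (ε : ℝ) (b : A) : Commute b (truncInv ε b) :=
  ((Commute.refl b).cfc_real _).symm

theorem mul_truncInv_mul_cfc (hε : 0 < ε) (hb : IsSelfAdjoint b) :
    b * truncInv ε b * cfc (fun t : ℝ => max (t - ε) 0) b = cfc (fun t : ℝ => max (t - ε) 0) b := by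
  have hcont := continuous_inv_max hε
  rw [mul_truncInv hε hb, ← cfc_mul _ _ b (by fun_prop) (by fun_prop)]
  congr! 2 with t
  rcases le_total t ε with h | h
  · rw [max_eq_right (sub_nonpos.2 h), mul_zero]
  · rw [max_eq_left h, mul_inv_cancel₀ (hε.trans_le h).ne', one_mul]

theorem mul_cfc_max_sub_div (hε : 0 < ε) (hb : IsSelfAdjoint b) :
    b * cfc (fun t : ℝ => max (t - ε) 0 / t) b = cfc (fun t : ℝ => max (t - ε) 0) b := by
  conv_lhs => enter [1]; rw [← cfc_id' ℝ b]
  rw [← cfc_mul _ _ b (by fun_prop) (continuous_max_sub_div hε).continuousOn]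
  congr! 2 with t
  rcases eq_or_ne t 0 with rfl | ht
  · simp [hε.le]
  · exact mul_div_cancel₀ _ ht

variable [PartialOrder A] [StarOrderedRing A]

theorem norm_mul_truncInv_le_one (hε : 0 < ε) (hb : 0 ≤ b) : ‖b * truncInv ε b‖ ≤ 1 := by
  rw [mul_truncInv hε hb.isSelfAdjoint]
  refine norm_cfc_le zero_le_one fun t ht => ?_
  have hq := mul_inv_max_mem_Icc hε (spectrum_nonneg_of_nonneg hb ht)
  rw [Real.norm_of_nonneg hq.1]
  exact hq.2

theorem norm_one_sub_mul_truncInv_le_one (hε : 0 < ε) (hb : 0 ≤ b) :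
    ‖1 - b * truncInv ε b‖ ≤ 1 := by
  rw [one_sub_mul_truncInv hε hb.isSelfAdjoint]
  refine norm_cfc_le zero_le_one fun t ht => ?_
  have hq := mul_inv_max_mem_Icc hε (spectrum_nonneg_of_nonneg hb ht)
  rw [Real.norm_of_nonneg (sub_nonneg.2 hq.2)]
  exact sub_le_self 1 hq.1

theorem norm_mul_one_sub_mul_truncInv_le (hε : 0 < ε) (hb : 0 ≤ b) :
    ‖b * (1 - b * truncInv ε b)‖ ≤ ε := by
  have hcont := continuous_inv_max hε
  have hcfc : b * (1 - b * truncInv ε b) = cfc (fun t : ℝ => t * (1 - t * (max t ε)⁻¹)) b := by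
    rw [cfc_mul (fun t => t) _ b (by fun_prop) (by fun_prop), cfc_id' ℝ b,
      one_sub_mul_truncInv hε hb.isSelfAdjoint]
  rw [hcfc]
  refine norm_cfc_le hε.le fun t ht => ?_
  have ht0 := spectrum_nonneg_of_nonneg hb ht
  have hq := mul_inv_max_mem_Icc hε ht0
  rcases le_total ε t with h | h
  · simpa [one_sub_mul_inv_max_of_le hε h] using hε.le
  · rw [Real.norm_of_nonneg (mul_nonneg ht0 (sub_nonneg.2 hq.2))]
    exact (mul_le_of_le_one_right ht0 (sub_le_self 1 hq.1)).trans h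

theorem mem_closure_image_mul_abs (y : A) :
    y ∈ closure ((· * CFC.abs y) '' Metric.closedBall 0 1) := by
  refine Metric.mem_closure_iff.2 fun δ hδ => ?_
  have hδ2 := half_pos hδ
  have habs := CFC.abs_nonneg y
  refine ⟨_, ⟨y * truncInv (δ / 2) (CFC.abs y), ?_, rfl⟩, ?_⟩
  · rw [mem_closedBall_zero_iff, ← norm_abs_mul]
    exact norm_mul_truncInv_le_one hδ2 habs
  · have hfactor : y - y * truncInv (δ / 2) (CFC.abs y) * CFC.abs y =
        y * (1 - CFC.abs y * truncInv (δ / 2) (CFC.abs y)) := by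
      rw [mul_assoc, (commute_truncInv _ _).eq, mul_sub, mul_one]
    rw [dist_eq_norm, hfactor, ← norm_abs_mul]
    exact (norm_mul_one_sub_mul_truncInv_le hδ2 habs).trans_lt (half_lt_self hδ)

end

/-! ### Correcting a unitary under a cutoff -/

section

variable {A : Type*} [CStarAlgebra A] [PartialOrder A] [StarOrderedRing A]

theorem abs_mul_eq_of_mul_eq {z f : A} (hz : z * f = f) (hz' : star z * f = f) :
    CFC.abs z * f = f := by
  have hunit : IsUnit (CFC.abs z + 1) :=
    CStarAlgebra.isUnit_of_le 1 (le_add_of_nonneg_left (CFC.abs_nonneg z))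
  refine sub_eq_zero.1 (hunit.mul_right_eq_zero.1 ?_)
  calc (CFC.abs z + 1) * (CFC.abs z * f - f) = CFC.abs z * CFC.abs z * f - f := by noncomm_ring
    _ = 0 := by rw [CFC.abs_mul_abs, mul_assoc, hz, hz', sub_self]

namespace IsPositiveTrace

variable {τ : A →ₗ[ℂ] ℂ} (hτ : IsPositiveTrace τ)
include hτ

theorem norm2_star_sub_compress_le {u p : A} (hu : u ∈ unitary A)
    (hp : IsSelfAdjoint p) (hp1 : ‖1 - p‖ ≤ 1) :
    norm2 τ (star u - (1 + (1 - p) * (star u - 1) * (1 - p))) ≤ 2 * norm2 τ ((u - 1) * p) := by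
  have hsplit : star u - (1 + (1 - p) * (star u - 1) * (1 - p)) =
      star ((u - 1) * p) + (1 - p) * ((star u - 1) * p) := by
    rw [star_mul, hp.star_eq, star_sub, star_one]
    noncomm_ring
  have hstar : norm2 τ ((star u - 1) * p) = norm2 τ ((u - 1) * p) := by
    rw [← norm2_mul_left_of_mem_unitary hu, ← norm2_neg, ← mul_assoc, mul_sub,
      Unitary.mul_star_self_of_mem hu, mul_one, ← neg_mul, neg_sub]
  calc norm2 τ (star u - (1 + (1 - p) * (star u - 1) * (1 - p)))
      ≤ norm2 τ (star ((u - 1) * p)) + norm2 τ ((1 - p) * ((star u - 1) * p)) :=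
        hsplit ▸ hτ.norm2_add_le _ _
    _ ≤ norm2 τ ((u - 1) * p) + 1 * norm2 τ ((u - 1) * p) := by
        rw [hτ.norm2_star, ← hstar]
        gcongr
        exact (hτ.norm2_mul_le _ _).trans (by gcongr; exact Real.sqrt_nonneg _)
    _ = 2 * norm2 τ ((u - 1) * p) := by ring

theorem exists_mem_unitary_forall_mul_eq
    (hpolar : ∀ y : A, ∃ w ∈ unitary A, w * CFC.abs y = y) {u p : A} (hu : u ∈ unitary A)
    (hp : IsSelfAdjoint p) (hp1 : ‖1 - p‖ ≤ 1) :
    ∃ v ∈ unitary A, norm2 τ (v - 1) ≤ 4 * norm2 τ ((u - 1) * p) ∧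
      ∀ f, p * f = f → v * f = u * f := by
  set z := 1 + (1 - p) * (star u - 1) * (1 - p) with hz
  obtain ⟨w, hw, hwz⟩ := hpolar z
  refine ⟨u * w, mul_mem hu hw, ?_, fun f hf => ?_⟩
  · calc norm2 τ (u * w - 1) = norm2 τ (w - star u) := by
          rw [← norm2_mul_left_of_mem_unitary hu (w - star u), mul_sub,
            Unitary.mul_star_self_of_mem hu]
      _ ≤ norm2 τ (w - z) + norm2 τ (z - star u) :=
          hτ.norm2_sub_le_norm2_sub_add_norm2_sub _ _ _
      _ ≤ norm2 τ (star u - z) + norm2 τ (star u - z) :=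
          add_le_add (hτ.norm2_sub_mul_abs_le (Unitary.star_mem hu) hw hwz) (norm2_sub_comm _ _).le
      _ ≤ 4 * norm2 τ ((u - 1) * p) := by
          linarith [hτ.norm2_star_sub_compress_le hu hp hp1]
  · have hpf : (1 - p) * f = 0 := by rw [sub_mul, hf, one_mul, sub_self]
    have hzf : z * f = f := by rw [hz, add_mul, mul_assoc _ _ f, hpf, mul_zero, one_mul, add_zero]
    have hzf' : star z * f = f := by
      simp only [hz, star_add, star_mul, star_sub, star_one, hp.star_eq, add_mul, one_mul,
        mul_assoc, hpf, mul_zero, add_zero]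
    have hwf : w * f = f := calc
      w * f = w * (CFC.abs z * f) := by rw [abs_mul_eq_of_mul_eq hzf hzf']
      _ = f := by rw [← mul_assoc, hwz, hzf]
    rw [mul_assoc, hwf]

theorem exists_mem_unitary_mul_cfc_abs_eq
    (hpolar : ∀ y : A, ∃ w ∈ unitary A, w * CFC.abs y = y) {ε : ℝ} (hε : 0 < ε) (a : A) :
    ∃ v ∈ unitary A, ε * norm2 τ (v - 1) ≤ 4 * norm2 τ (a - CFC.abs a) ∧
      a * cfc (fun t : ℝ => max (t - ε) 0 / t) (CFC.abs a) =
        v * cfc (fun t : ℝ => max (t - ε) 0) (CFC.abs a) := by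
  obtain ⟨u, hu, hua⟩ := hpolar a
  have hb0 : 0 ≤ CFC.abs a := CFC.abs_nonneg a
  obtain ⟨v, hv, hv1, hvf⟩ := hτ.exists_mem_unitary_forall_mul_eq hpolar hu
    (p := CFC.abs a * truncInv ε (CFC.abs a))
    (mul_truncInv hε hb0.isSelfAdjoint ▸ cfc_predicate _ _)
    (norm_one_sub_mul_truncInv_le_one hε hb0)
  refine ⟨v, hv, ?_, ?_⟩
  · have hdist : ε * norm2 τ ((u - 1) * (CFC.abs a * truncInv ε (CFC.abs a))) ≤
        norm2 τ (a - CFC.abs a) := calc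
      _ = ε * norm2 τ ((a - CFC.abs a) * truncInv ε (CFC.abs a)) := by
          rw [← mul_assoc, sub_mul u, hua, one_mul]
      _ ≤ ε * (norm2 τ (a - CFC.abs a) * ε⁻¹) := by
          gcongr
          exact (hτ.norm2_mul_le_mul_norm _ _).trans
            (mul_le_mul_of_nonneg_left (norm_truncInv_le hε _) (Real.sqrt_nonneg _))
      _ = norm2 τ (a - CFC.abs a) := by field_simp
    linarith [mul_le_mul_of_nonneg_left hv1 hε.le]
  · rw [hvf _ (mul_truncInv_mul_cfc hε hb0.isSelfAdjoint),
      ← mul_cfc_max_sub_div hε hb0.isSelfAdjoint, ← mul_assoc, hua]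

end IsPositiveTrace

end

/-! ### Closed star subalgebras -/

section

variable {A : Type*} [CStarAlgebra A] (S : StarSubalgebra ℂ A) [IsClosed (S : Set A)]

theorem coe_cfc_of_isClosed {f : ℝ → ℝ} {x : S} (hf : ContinuousOn f (spectrum ℝ x))
    (hx : IsSelfAdjoint x) : ((cfc f x : S) : A) = cfc f (x : A) :=
  S.subtype.map_cfc f x (hφ := continuous_subtype_val) (hφa := hx.map S.subtype)

variable [PartialOrder A] [StarOrderedRing A]

instance starOrderedRing_of_isClosed : StarOrderedRing S := by
  refine .of_nonneg_iff' (fun h z => add_le_add_right (α := A) h z) fun x => ⟨fun hx => ?_, ?_⟩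
  · have hxA : 0 ≤ (x : A) := hx
    have hsa : IsSelfAdjoint x := Subtype.ext hxA.isSelfAdjoint.star_eq
    refine ⟨cfc Real.sqrt x, Subtype.ext ?_⟩
    rw [(cfc_predicate Real.sqrt x : IsSelfAdjoint _).star_eq, MulMemClass.coe_mul,
      coe_cfc_of_isClosed S (by fun_prop) hsa, ← cfcₙ_eq_cfc, ← CFC.sqrt_eq_real_sqrt (x : A),
      CFC.sqrt_mul_sqrt_self _ hxA]
  · rintro ⟨s, rfl⟩
    exact star_mul_self_nonneg (s : A)

theorem coe_abs_of_isClosed (x : S) :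
    ((CFC.abs x : S) : A) = cfc Real.sqrt (star (x : A) * x) := by
  rw [CFC.abs, CFC.sqrt_eq_real_sqrt (star x * x), cfcₙ_eq_cfc,
    coe_cfc_of_isClosed S (by fun_prop) (.star_mul_self x)]
  rfl

end

/-! ### Weak operator compactness -/

section WeakOperatorTopology

variable {𝕜 : Type*} [RCLike 𝕜]
  {E : Type*} [NormedAddCommGroup E] [NormedSpace 𝕜 E]
  {F : Type*} [NormedAddCommGroup F] [InnerProductSpace 𝕜 F] [CompleteSpace F]

theorem exists_tendsto_inner_of_norm_le {α : Type*} (𝔘 : Ultrafilter α) {f : α → F} {r : ℝ}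
    (hf : ∀ᶠ a in 𝔘, ‖f a‖ ≤ r) :
    ∃ v, ‖v‖ ≤ r ∧ ∀ y, Tendsto (fun a => ⟪y, f a⟫_𝕜) 𝔘 (𝓝 ⟪y, v⟫_𝕜) := by
  let ℓ : α → WeakDual 𝕜 F := fun a =>
    StrongDual.toWeakDual (InnerProductSpace.toDual 𝕜 F (f a))
  obtain ⟨m, hm, hlim⟩ := isCompact_iff_ultrafilter_le_nhds.1
    (WeakDual.isCompact_closedBall (0 : StrongDual 𝕜 F) r) (𝔘.map ℓ)
    (le_principal_iff.2 (hf.mono fun a ha => by simpa [ℓ] using ha))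
  refine ⟨(InnerProductSpace.toDual 𝕜 F).symm (WeakDual.toStrongDual m),
    by simpa using hm, fun y => ?_⟩
  have heval : Tendsto (fun a => ℓ a y) 𝔘 (𝓝 (m y)) :=
    ((WeakDual.eval_continuous y).tendsto m).comp hlim
  rw [← inner_conj_symm, InnerProductSpace.toDual_symm_apply]
  refine ((RCLike.continuous_conj.tendsto _).comp heval).congr fun a => ?_
  exact inner_conj_symm (𝕜 := 𝕜) y (f a)

theorem isCompact_setOf_norm_toCLM_le (r : ℝ) :
    IsCompact {T : E →WOT[𝕜] F | ‖T.toCLM‖ ≤ r} := by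
  refine isCompact_iff_ultrafilter_le_nhds.2 fun 𝔘 h𝔘 => ?_
  have hr : ∀ᶠ T : E →WOT[𝕜] F in 𝔘, ‖T.toCLM‖ ≤ r := le_principal_iff.1 h𝔘
  have hr0 : 0 ≤ r := hr.exists.elim fun T hT => (norm_nonneg _).trans hT
  choose L hLnorm hL using fun x : E => exists_tendsto_inner_of_norm_le (𝕜 := 𝕜) 𝔘
    (f := fun T : E →WOT[𝕜] F => T x) (r := r * ‖x‖)
    (hr.mono fun T hT => T.toCLM.le_of_opNorm_le hT x)
  have hadd : ∀ x y, L (x + y) = L x + L y := fun x y => ext_inner_left 𝕜 fun w => by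
    rw [inner_add_right]
    exact tendsto_nhds_unique (hL (x + y) w)
      (by simpa [inner_add_right] using (hL x w).add (hL y w))
  have hsmul : ∀ (c : 𝕜) x, L (c • x) = c • L x := fun c x => ext_inner_left 𝕜 fun w => by
    rw [inner_smul_right]
    exact tendsto_nhds_unique (hL (c • x) w)
      (by simpa [inner_smul_right] using (hL x w).const_mul c)
  let T : E →L[𝕜] F := LinearMap.mkContinuous ⟨⟨L, hadd⟩, hsmul⟩ r hLnorm
  exact ⟨.ofCLM T, LinearMap.mkContinuous_norm_le _ hr0 hLnorm,
    ContinuousLinearMapWOT.le_nhds_iff_forall_inner_apply_le_nhds.2 fun x y => hL x y⟩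

end WeakOperatorTopology

theorem extremePoints_nonempty_of_image {𝕜 E F : Type*} [Semiring 𝕜] [PartialOrder 𝕜]
    [AddCommMonoid E] [Module 𝕜 E] [AddCommMonoid F] [Module 𝕜 F] {f : E →ₗ[𝕜] F}
    (hf : Function.Injective f) {s : Set E} (hs : ((f '' s).extremePoints 𝕜).Nonempty) :
    (s.extremePoints 𝕜).Nonempty := by
  obtain ⟨-, ⟨x, hx, rfl⟩, hext⟩ := hs
  refine ⟨x, hx, fun y hy z hz ⟨α, β, hα, hβ, hαβ, hx⟩ => hf ?_⟩
  exact hext (Set.mem_image_of_mem f hy) (Set.mem_image_of_mem f hz)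
    ⟨α, β, hα, hβ, hαβ, by rw [← hx, map_add, map_smul, map_smul]⟩

section VonNeumannAlgebra

variable {H : Type*} [NormedAddCommGroup H] [InnerProductSpace ℂ H] [CompleteSpace H]
  (M : VonNeumannAlgebra H)

open ContinuousLinearMapWOT

theorem isClosed_preimage_toCLM :
    IsClosed (toCLM ⁻¹' (M : Set (H →L[ℂ] H)) : Set (H →WOT[ℂ] H)) := by
  have hcentralizer : (toCLM ⁻¹' (M : Set (H →L[ℂ] H)) : Set (H →WOT[ℂ] H)) =
      Set.centralizer (toCLM ⁻¹' Set.centralizer (M : Set (H →L[ℂ] H))) := by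
    ext T
    conv_lhs => rw [← M.centralizer_centralizer]
    exact ⟨fun h m hm => congrArg ofCLM (h m.toCLM hm),
      fun h m hm => congrArg toCLM (h (ofCLM m) hm)⟩
  rw [hcentralizer]
  exact Set.isClosed_centralizer _

theorem isClosed_toStarSubalgebra : IsClosed (M.toStarSubalgebra : Set (H →L[ℂ] H)) :=
  (isClosed_preimage_toCLM M).preimage continuous_ofCLM

attribute [local instance] isClosed_toStarSubalgebra

theorem isCompact_setOf_mem_norm_le (r : ℝ) :
    IsCompact ({T | T.toCLM ∈ M ∧ ‖T.toCLM‖ ≤ r} : Set (H →WOT[ℂ] H)) :=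
  (isCompact_setOf_norm_toCLM_le r).inter_left (isClosed_preimage_toCLM M)

theorem isClosed_image_mul_right_closedBall (b : M.toStarSubalgebra) (r : ℝ) :
    IsClosed ((· * b) '' Metric.closedBall 0 r) := by
  let ι : M.toStarSubalgebra → H →WOT[ℂ] H := fun x => ofCLM x
  have hclosed : IsClosed ((· * ι b) '' {T : H →WOT[ℂ] H | T.toCLM ∈ M ∧ ‖T.toCLM‖ ≤ r}) :=
    ((isCompact_setOf_mem_norm_le M r).image (by fun_prop)).isClosed
  convert hclosed.preimage (f := ι) (continuous_ofCLM.comp continuous_subtype_val) using 1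
  ext y
  constructor
  · rintro ⟨x, hx, rfl⟩
    exact ⟨ι x, ⟨x.2, mem_closedBall_zero_iff.1 hx⟩, rfl⟩
  · rintro ⟨T, ⟨hTM, hT⟩, hTy⟩
    exact ⟨⟨T.toCLM, hTM⟩, mem_closedBall_zero_iff.2 hT, Subtype.ext (congrArg toCLM hTy)⟩

theorem extremePoints_setOf_mul_eq_nonempty {b y : M.toStarSubalgebra} {r : ℝ}
    (h : {x : M.toStarSubalgebra | ‖x‖ ≤ r ∧ x * b = y}.Nonempty) :
    ({x : M.toStarSubalgebra | ‖x‖ ≤ r ∧ x * b = y}.extremePoints ℝ).Nonempty := by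
  let ι : M.toStarSubalgebra →ₗ[ℝ] H →WOT[ℂ] H :=
    ((linearEquiv ℂ).symm.toLinearMap ∘ₗ
      M.toStarSubalgebra.subtype.toAlgHom.toLinearMap).restrictScalars ℝ
  have himage : ι '' {x | ‖x‖ ≤ r ∧ x * b = y} =
      {T | T.toCLM ∈ M ∧ ‖T.toCLM‖ ≤ r} ∩ {T | T * ι b = ι y} := by
    ext T
    constructor
    · rintro ⟨x, ⟨hx, rfl⟩, rfl⟩
      exact ⟨⟨x.2, hx⟩, rfl⟩
    · rintro ⟨⟨hTM, hT⟩, hTy⟩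
      exact ⟨⟨T.toCLM, hTM⟩, ⟨hT, Subtype.ext (congrArg toCLM hTy)⟩, rfl⟩
  refine extremePoints_nonempty_of_image (f := ι)
    (ofCLM_injective.comp Subtype.val_injective) ?_
  refine IsCompact.extremePoints_nonempty ?_ (h.image ι)
  rw [himage]
  exact (isCompact_setOf_mem_norm_le M r).inter_right
    (isClosed_eq (by fun_prop) continuous_const)

variable {M}

theorem IsPositiveTrace.exists_mem_unitary_mul_abs_eq {τ : M.toStarSubalgebra →ₗ[ℂ] ℂ}
    (hτ : IsPositiveTrace τ) (hfaithful : ∀ x, τ (star x * x) = 0 → x = 0)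
    (y : M.toStarSubalgebra) : ∃ u ∈ unitary M.toStarSubalgebra, u * CFC.abs y = y := by
  have hclosed := isClosed_image_mul_right_closedBall M (CFC.abs y) 1
  obtain ⟨x₀, hx₀, hx₀y⟩ := hclosed.closure_subset (mem_closure_image_mul_abs y)
  obtain ⟨u, hu⟩ := extremePoints_setOf_mul_eq_nonempty M
    ⟨x₀, mem_closedBall_zero_iff.1 hx₀, hx₀y⟩
  have hstar : star y * y = star (CFC.abs y) * CFC.abs y := by
    rw [(CFC.abs_nonneg y).isSelfAdjoint.star_eq, CFC.abs_mul_abs]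
  have hdefect := defect_mul_mul_defect_eq_zero_of_mem_extremePoints hu hstar
  exact ⟨u, hτ.mem_unitary_of_defect_mul_mul_defect_eq_zero hfaithful hu.1.1 hdefect, hu.1.2⟩

end VonNeumannAlgebra

theorem vonNeumann_controlled_unitary_polar_form_general
    {H : Type*} [NormedAddCommGroup H] [InnerProductSpace ℂ H] [CompleteSpace H]
    (M : VonNeumannAlgebra H)
    (τ : M.toStarSubalgebra →ₗ[ℂ] ℂ)
    (hτpos : ∀ x : M.toStarSubalgebra, 0 ≤ τ (star x * x))
    (hτfaithful : ∀ x : M.toStarSubalgebra, τ (star x * x) = 0 → x = 0)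
    (hτtr : ∀ x y : M.toStarSubalgebra, τ (x * y) = τ (y * x))
    (ε : ℝ) (hε : 0 < ε)
    (a : M.toStarSubalgebra)
    (habs : cfc Real.sqrt (star (a : H →L[ℂ] H) * (a : H →L[ℂ] H)) ∈ M.toStarSubalgebra) :
    ∃ u : M.toStarSubalgebra, star u * u = 1 ∧ u * star u = 1 ∧
      ε * norm2 τ (u - 1) ≤ 4 * norm2 τ (a - ⟨_, habs⟩) ∧
      (a : H →L[ℂ] H) *
          cfc (fun t : ℝ => max (t - ε) 0 / t)
            (cfc Real.sqrt (star (a : H →L[ℂ] H) * (a : H →L[ℂ] H))) =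
        (u : H →L[ℂ] H) *
          cfc (fun t : ℝ => max (t - ε) 0)
            (cfc Real.sqrt (star (a : H →L[ℂ] H) * (a : H →L[ℂ] H))) := by
  have := isClosed_toStarSubalgebra M
  have hτ : IsPositiveTrace τ := ⟨hτpos, hτtr⟩
  have habs_eq := coe_abs_of_isClosed M.toStarSubalgebra a
  have hsa : IsSelfAdjoint (CFC.abs a) := (CFC.abs_nonneg a).isSelfAdjoint
  obtain ⟨u, hu, hu1, hua⟩ := hτ.exists_mem_unitary_mul_cfc_abs_eq
    (hτ.exists_mem_unitary_mul_abs_eq hτfaithful) hε a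
  refine ⟨u, hu.1, hu.2, ?_, ?_⟩
  · rwa [show (⟨_, habs⟩ : M.toStarSubalgebra) = CFC.abs a from Subtype.ext habs_eq.symm]
  · rw [← habs_eq, ← coe_cfc_of_isClosed _ (continuous_max_sub_div hε).continuousOn hsa,
      ← coe_cfc_of_isClosed _ (by fun_prop) hsa]
    exact congrArg Subtype.val hua

/-- Let `M` be a von Neumann algebra on a complex Hilbert space `H` with a faithful tracial
state `τ`, let `ε > 0` and suppose `a ∈ M` satisfies `‖a - |a|‖_{2,τ} < ε²`, where
`|a| = (a*a)^{1/2}`.  Then there is a unitary `u ∈ M` with `‖u - 1‖_{2,τ} < 4ε` and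
`a·gₑ(|a|) = u·fₑ(|a|)`, where `gₑ(t) = max(t - ε, 0)/t` (with `gₑ(0) = 0`) and
`fₑ(t) = max(t - ε, 0)`. -/
theorem vonNeumann_controlled_unitary_polar_form
    {H : Type*} [NormedAddCommGroup H] [InnerProductSpace ℂ H] [CompleteSpace H]
    (M : VonNeumannAlgebra H)
    (τ : M.toStarSubalgebra →ₗ[ℂ] ℂ)
    (hτ1 : τ 1 = 1)
    (hτpos : ∀ x : M.toStarSubalgebra, 0 ≤ τ (star x * x))
    (hτfaithful : ∀ x : M.toStarSubalgebra, τ (star x * x) = 0 → x = 0)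
    (hτtr : ∀ x y : M.toStarSubalgebra, τ (x * y) = τ (y * x))
    (ε : ℝ) (hε : 0 < ε)
    (a : M.toStarSubalgebra)
    -- `|a| = (a*a)^{1/2}` belongs to `M` (automatic, as `M` is closed under the
    -- continuous functional calculus)
    (habs : cfc Real.sqrt (star (a : H →L[ℂ] H) * (a : H →L[ℂ] H)) ∈ M.toStarSubalgebra)
    (hclose : norm2 τ (a - ⟨_, habs⟩) < ε ^ 2) :
    ∃ u : M.toStarSubalgebra, star u * u = 1 ∧ u * star u = 1 ∧
      norm2 τ (u - 1) < 4 * ε ∧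
      (a : H →L[ℂ] H) *
          cfc (fun t : ℝ => max (t - ε) 0 / t)
            (cfc Real.sqrt (star (a : H →L[ℂ] H) * (a : H →L[ℂ] H))) =
        (u : H →L[ℂ] H) *
          cfc (fun t : ℝ => max (t - ε) 0)
            (cfc Real.sqrt (star (a : H →L[ℂ] H) * (a : H →L[ℂ] H))) := by
  obtain ⟨u, hu, hu', hu1, hua⟩ := vonNeumann_controlled_unitary_polar_form_general
    M τ hτpos hτfaithful hτtr ε hε a habs
  exact ⟨u, hu, hu', lt_of_mul_lt_mul_left (by linarith) hε.le, hua⟩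
end
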